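/- arXiv:1707.06252 — 7 statements merged into one kernel-verified Lean document; each statement's English description precedes it below -/
import Mathlib

section
/- Let ι and κ be finite types, let A be a real symmetric positive definite ι×ι matrix, and let e : κ → ι be an injective map (selecting a principal submatrix). Then the κ×κ matrix (A⁻¹).submatrix e e − (A.submatrix e e)⁻¹ is positive semidefinite. (This is the inequality [A⁻¹]_{[kk]} ≥ [A_{[kk]}]⁻¹ of Proposition 1, stated for an arbitrary principal sub-block of an arbitrary block partition.) -/
/-!
Let `E` be the `ι × κ` selection matrix whose `j`-th column is the basis vector indexed by `e j`,
and put `B = Eᵀ A E`, the principal submatrix of `A`. Injectivity of `e` gives `Eᵀ E = 1`. With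
`X = A⁻¹ E - E B⁻¹`, expanding gives
`Xᵀ A X = Eᵀ A⁻¹ E - B⁻¹ (Eᵀ E) - (Eᵀ E) B⁻¹ + B⁻¹ B B⁻¹ = Eᵀ A⁻¹ E - B⁻¹`,
so the difference in question is congruent to `A` through `X` and is positive semidefinite.
-/

/-- Proposition 1 (inequality part): for a real symmetric positive definite matrix `A`
and an injective index selection `e : κ → ι`, the principal submatrix of `A⁻¹`
dominates the inverse of the corresponding principal submatrix of `A` in the
Loewner order, i.e. `[A⁻¹]_{[kk]} ≥ [A_{[kk]}]⁻¹`. -/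
theorem inv_submatrix_ge_submatrix_inv
    {ι κ : Type*} [Fintype ι] [DecidableEq ι] [Fintype κ] [DecidableEq κ]
    (A : Matrix ι ι ℝ) (hA : A.PosDef)
    (e : κ → ι) (he : Function.Injective e) :
    ((A⁻¹).submatrix e e - (A.submatrix e e)⁻¹).PosSemidef := by
  obtain ⟨E, hE⟩ : ∃ E : Matrix ι κ ℝ, E = (1 : Matrix ι ι ℝ).submatrix id e := ⟨_, rfl⟩
  have hsub (M : Matrix ι ι ℝ) : M.submatrix e e = E.conjTranspose * (M * E) := by
    ext i j
    simp [hE, Matrix.mul_apply, Matrix.one_apply]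
  have hEE : E.conjTranspose * E = 1 := by
    have h := hsub 1
    rw [Matrix.submatrix_one e he, Matrix.one_mul] at h
    exact h.symm
  have hB : (A.submatrix e e).PosDef := hA.submatrix he
  obtain ⟨B, hBdef⟩ : ∃ B, B = A.submatrix e e := ⟨_, rfl⟩
  rw [← hBdef] at hB ⊢
  have hBE : E.conjTranspose * (A * E) = B := by rw [hBdef, hsub]
  have hAu : IsUnit A.det := (Matrix.isUnit_iff_isUnit_det A).1 hA.isUnit
  have hBu : IsUnit B.det := (Matrix.isUnit_iff_isUnit_det B).1 hB.isUnit
  have hX : (A⁻¹ * E - E * B⁻¹).conjTranspose * A * (A⁻¹ * E - E * B⁻¹)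
      = (A⁻¹).submatrix e e - B⁻¹ := by
    have hXt : (A⁻¹ * E - E * B⁻¹).conjTranspose
        = E.conjTranspose * A⁻¹ - B⁻¹ * E.conjTranspose := by
      rw [Matrix.conjTranspose_sub, Matrix.conjTranspose_mul, Matrix.conjTranspose_mul,
        hA.inv.isHermitian.eq, hB.inv.isHermitian.eq]
    have hAX : A * (A⁻¹ * E - E * B⁻¹) = E - A * E * B⁻¹ := by
      rw [Matrix.mul_sub, Matrix.mul_nonsing_inv_cancel_left _ _ hAu, Matrix.mul_assoc]
    -- `Eᵀ A X = Eᵀ E - B B⁻¹ = 0`, so only the `Eᵀ A⁻¹` part of `Xᵀ` contributes.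
    have hzero : E.conjTranspose * (E - A * E * B⁻¹) = 0 := by
      rw [Matrix.mul_sub, hEE, ← Matrix.mul_assoc, hBE, Matrix.mul_nonsing_inv _ hBu, sub_self]
    rw [Matrix.mul_assoc, hAX, hXt, Matrix.sub_mul, Matrix.mul_assoc B⁻¹, hzero, Matrix.mul_zero,
      sub_zero, Matrix.mul_assoc, Matrix.mul_sub, Matrix.mul_assoc A,
      Matrix.nonsing_inv_mul_cancel_left _ _ hAu, Matrix.mul_sub, ← hsub, ← Matrix.mul_assoc,
      hEE, Matrix.one_mul]
  rw [← hX]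
  exact hA.posSemidef.conjTranspose_mul_mul_same _
end

section
/- Let ι and κ be finite types, let A be a real symmetric positive definite ι×ι matrix, and let e : κ → ι be an injective map. Then (A⁻¹).submatrix e e = (A.submatrix e e)⁻¹ if and only if A i (e j) = 0 for every i ∈ ι not in the range of e and every j ∈ κ. (Equality case of Proposition 1: the equality holds for a given block exactly when all off-diagonal blocks of A involving that block vanish.) -/
/-!
Let `E` be the `ι × κ` selection matrix whose `j`-th column is the basis vector at `e j`, so that
`S = Eᵀ A E` and `T = Eᵀ A⁻¹ E` are the principal submatrices of `A` and `A⁻¹` selected by `e`.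
The gap `T - S⁻¹` is a Gram matrix for `A`: with `X = A⁻¹ E - E S⁻¹` one has
`Xᵀ A X = T - S⁻¹` (`gram_gap`). As `A` is positive definite, `T = S⁻¹` forces `X = 0`
(`eq_zero_of_gram_eq_zero`), that is `A E = E S`, which says exactly that the columns of `A`
selected by `e` vanish outside the range of `e` (`mul_sel_eq_iff`). Conversely `A E = E S` gives
`A⁻¹ E = E S⁻¹`, and multiplying by `Eᵀ` on the left gives `T = S⁻¹`.
-/

namespace InvSubmatrix

open Matrix

variable {ι κ : Type*} [Fintype ι] [DecidableEq ι]

/-- The selection matrix of `e`: its `j`-th column is the standard basis vector at `e j`. -/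
def sel (e : κ → ι) : Matrix ι κ ℝ := (1 : Matrix ι ι ℝ).submatrix id e

lemma mul_sel (A : Matrix ι ι ℝ) (e : κ → ι) : A * sel e = A.submatrix id e := by
  ext i j
  simp [sel, Matrix.mul_apply, Matrix.one_apply]

lemma selT_mul {μ : Type*} (M : Matrix ι μ ℝ) (e : κ → ι) :
    (sel e)ᵀ * M = M.submatrix e id := by
  ext i j
  simp [sel, Matrix.mul_apply, Matrix.one_apply]

lemma selT_mul_sel [DecidableEq κ] {e : κ → ι} (he : Function.Injective e) :
    (sel e)ᵀ * sel e = 1 := by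
  rw [selT_mul]
  ext i j
  simp [sel, Matrix.one_apply, he.eq_iff]

lemma selT_mul_mul_sel (A : Matrix ι ι ℝ) (e : κ → ι) :
    (sel e)ᵀ * (A * sel e) = A.submatrix e e := by
  rw [mul_sel, selT_mul]
  rfl

/-- The selected columns of `A` vanish off the range of `e` iff the span of the selected basis
vectors is invariant under `A`. -/
lemma mul_sel_eq_iff [Fintype κ] (A : Matrix ι ι ℝ) {e : κ → ι} (he : Function.Injective e) :
    A * sel e = sel e * A.submatrix e e ↔ ∀ i : ι, i ∉ Set.range e → ∀ j : κ, A i (e j) = 0 := by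
  classical
  rw [mul_sel]
  constructor
  · intro h i hi j
    have hij := congrFun (congrFun h i) j
    rw [Matrix.mul_apply, Finset.sum_eq_zero] at hij
    · exact hij
    · intro k _
      have hk : i ≠ e k := fun hk => hi ⟨k, hk.symm⟩
      simp [sel, hk]
  · intro h
    ext i j
    by_cases hi : i ∈ Set.range e
    · obtain ⟨k, rfl⟩ := hi
      simp [sel, Matrix.mul_apply, Matrix.one_apply, he.eq_iff]
    · rw [Matrix.mul_apply, Finset.sum_eq_zero]
      · exact h i hi j
      · intro k _
        have hk : i ≠ e k := fun hk => hi ⟨k, hk.symm⟩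
        simp [sel, hk]

lemma eq_zero_of_gram_eq_zero {ι κ : Type*} [Fintype ι] {A : Matrix ι ι ℝ} (hA : A.PosDef) (X : Matrix ι κ ℝ)
    (h : Xᵀ * (A * X) = 0) : X = 0 := by
  ext i j
  by_contra hij
  have hx : (fun i => X i j) ≠ 0 := fun h0 => hij (congrFun h0 i)
  have hpos := hA.dotProduct_mulVec_pos hx
  have hjj : (Xᵀ * (A * X)) j j = 0 := by rw [h]; rfl
  exact hpos.ne' hjj

lemma gram_gap [Fintype κ] [DecidableEq κ] {A : Matrix ι ι ℝ} (hA : A.PosDef) {e : κ → ι}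
    (he : Function.Injective e) :
    (A⁻¹ * sel e - sel e * (A.submatrix e e)⁻¹)ᵀ *
        (A * (A⁻¹ * sel e - sel e * (A.submatrix e e)⁻¹)) =
      A⁻¹.submatrix e e - (A.submatrix e e)⁻¹ := by
  have hdA : IsUnit A.det := (Matrix.isUnit_iff_isUnit_det _).1 hA.isUnit
  have hdS : IsUnit (A.submatrix e e).det :=
    (Matrix.isUnit_iff_isUnit_det _).1 (hA.submatrix he).isUnit
  have hAt : Aᵀ = A := hA.isHermitian
  have hE := selT_mul_sel he
  have hS := selT_mul_mul_sel A e
  have hT := selT_mul_mul_sel A⁻¹ e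
  have hSt : (A.submatrix e e)ᵀ = A.submatrix e e := by rw [Matrix.transpose_submatrix, hAt]
  set S := A.submatrix e e
  have h1 : A * (A⁻¹ * sel e - sel e * S⁻¹) = sel e - A * sel e * S⁻¹ := by
    rw [Matrix.mul_sub, Matrix.mul_nonsing_inv_cancel_left _ _ hdA, Matrix.mul_assoc]
  have h2 : (A⁻¹ * sel e - sel e * S⁻¹)ᵀ = (sel e)ᵀ * A⁻¹ - S⁻¹ * (sel e)ᵀ := by
    rw [Matrix.transpose_sub, Matrix.transpose_mul, Matrix.transpose_mul,
      Matrix.transpose_nonsing_inv, Matrix.transpose_nonsing_inv, hAt, hSt]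
  have h3 : A⁻¹ * (A * (sel e * S⁻¹)) = sel e * S⁻¹ :=
    Matrix.nonsing_inv_mul_cancel_left _ _ hdA
  have h4 : (sel e)ᵀ * (A * (sel e * S⁻¹)) = 1 := by
    rw [← Matrix.mul_assoc A, ← Matrix.mul_assoc, hS, Matrix.mul_nonsing_inv _ hdS]
  have h5 : (sel e)ᵀ * (sel e * S⁻¹) = S⁻¹ := by
    rw [← Matrix.mul_assoc, hE, Matrix.one_mul]
  rw [h1, h2]
  -- The expansion is `T - S⁻¹ - S⁻¹ + S⁻¹`.
  simp only [Matrix.sub_mul, Matrix.mul_sub, Matrix.mul_assoc, h3, h4, h5, hT, hE]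
  simp

end InvSubmatrix


/-- Proposition 1 (equality case): for a real symmetric positive definite matrix `A`
and an injective index selection `e : κ → ι`, the principal submatrix of `A⁻¹`
equals the inverse of the corresponding principal submatrix of `A` if and only if
all entries of `A` coupling the selected block to the rest of the matrix vanish. -/
theorem inv_submatrix_eq_submatrix_inv_iff
    {ι κ : Type*} [Fintype ι] [DecidableEq ι] [Fintype κ] [DecidableEq κ]
    (A : Matrix ι ι ℝ) (hA : A.PosDef)
    (e : κ → ι) (he : Function.Injective e) :
    (A⁻¹).submatrix e e = (A.submatrix e e)⁻¹ ↔
      ∀ i : ι, i ∉ Set.range e → ∀ j : κ, A i (e j) = 0 := by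
  have hdA : IsUnit A.det := (Matrix.isUnit_iff_isUnit_det _).1 hA.isUnit
  have hdS : IsUnit (A.submatrix e e).det :=
    (Matrix.isUnit_iff_isUnit_det _).1 (hA.submatrix he).isUnit
  rw [← InvSubmatrix.mul_sel_eq_iff A he]
  constructor
  · intro h
    have hX := InvSubmatrix.eq_zero_of_gram_eq_zero hA _
      ((InvSubmatrix.gram_gap hA he).trans (sub_eq_zero.2 h))
    have hX' := sub_eq_zero.1 hX
    calc A * InvSubmatrix.sel e
        = A * (InvSubmatrix.sel e * (A.submatrix e e)⁻¹) * A.submatrix e e := by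
          rw [Matrix.mul_assoc, Matrix.nonsing_inv_mul_cancel_right _ _ hdS]
      _ = InvSubmatrix.sel e * A.submatrix e e := by
          rw [← hX', Matrix.mul_nonsing_inv_cancel_left _ _ hdA]
  · intro h
    have h' : A⁻¹ * InvSubmatrix.sel e = InvSubmatrix.sel e * (A.submatrix e e)⁻¹ := by
      calc A⁻¹ * InvSubmatrix.sel e
          = A⁻¹ * (InvSubmatrix.sel e * A.submatrix e e * (A.submatrix e e)⁻¹) := by
            rw [Matrix.mul_nonsing_inv_cancel_right _ _ hdS]
        _ = InvSubmatrix.sel e * (A.submatrix e e)⁻¹ := by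
            rw [← h, Matrix.mul_assoc, Matrix.nonsing_inv_mul_cancel_left _ _ hdA]
    rw [← InvSubmatrix.selT_mul_mul_sel, h', ← Matrix.mul_assoc, InvSubmatrix.selT_mul_sel he,
      Matrix.one_mul]
end

section
/- Let M = Matrix.fromBlocks a bᵀ b c be a symmetric positive definite real block matrix, where a is n×n, c is m×m and b is m×n. Then the bottom-right m×m block of M⁻¹ satisfies (M⁻¹).toBlocks₂₂ − c⁻¹ is positive semidefinite, and (M⁻¹).toBlocks₂₂ = c⁻¹ if and only if b = 0. (The inverse of the diagonal block of M is dominated by the corresponding diagonal block of M⁻¹, with equality exactly when M is block-diagonal.) -/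
/-!
Let `P = (M⁻¹).toBlocks₁₁`. As a principal block of the positive definite matrix `M⁻¹`, it is
positive definite, and it is the inverse of the Schur complement `a - bᵀ c⁻¹ b`. The block
inversion formula then reads `(M⁻¹).toBlocks₂₂ - c⁻¹ = X P Xᵀ` with `X = c⁻¹ b`. The right-hand
side is positive semidefinite, and it vanishes only if `X = 0`, that is, only if `b = c X = 0`.
-/

open Matrix

/-- A congruence transform of a positive definite matrix vanishes only if the transforming matrix
does: the diagonal entries of `X * P * Xᵀ` are the values of the quadratic form of `P` at the rows
of `X`. -/
lemma eq_zero_of_posDef_congr_eq_zero {n m : Type*} [Fintype n]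
    {P : Matrix n n ℝ} (hP : P.PosDef) {X : Matrix m n ℝ} (h : X * P * Xᵀ = 0) : X = 0 := by
  suffices hrow : ∀ i, X i = 0 from funext hrow
  intro i
  by_contra hi
  have hpos := hP.dotProduct_mulVec_pos hi
  have hii : X i ⬝ᵥ (P *ᵥ X i) = 0 := by
    have h0 := congrFun (congrFun h i) i
    rw [Matrix.mul_assoc] at h0
    exact h0
  rw [star_trivial, hii] at hpos
  exact lt_irrefl _ hpos

lemma inv_toBlocks₂₂_sub_inv_eq {n m : Type*} [Fintype n] [DecidableEq n] [Fintype m]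
    [DecidableEq m] (a : Matrix n n ℝ) (b : Matrix m n ℝ) (c : Matrix m m ℝ)
    (hM : (Matrix.fromBlocks a bᵀ b c).PosDef) (hc : c.PosDef) :
    ((Matrix.fromBlocks a bᵀ b c)⁻¹).toBlocks₂₂ - c⁻¹ =
      (c⁻¹ * b) * ((Matrix.fromBlocks a bᵀ b c)⁻¹).toBlocks₁₁ * (c⁻¹ * b)ᵀ := by
  have hct : cᵀ = c := hc.isHermitian
  have : Invertible c := hc.isUnit.invertible
  have : Invertible (Matrix.fromBlocks a bᵀ b c) := hM.isUnit.invertible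
  have := invertibleOfFromBlocks₂₂Invertible a bᵀ b c
  rw [← invOf_eq_nonsing_inv (Matrix.fromBlocks a bᵀ b c), invOf_fromBlocks₂₂_eq,
    toBlocks_fromBlocks₂₂, toBlocks_fromBlocks₁₁, transpose_mul, transpose_nonsing_inv, hct,
    ← invOf_eq_nonsing_inv c, add_sub_cancel_left]
  simp only [Matrix.mul_assoc]

/-- For a symmetric positive definite block matrix `M = fromBlocks a bᵀ b c`, the
bottom-right block of `M⁻¹` dominates `c⁻¹` in the Loewner order, with equality
exactly when `M` is block-diagonal (`b = 0`). -/
theorem inv_toBlocks₂₂_ge_inv_block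
    {n m : Type*} [Fintype n] [DecidableEq n] [Fintype m] [DecidableEq m]
    (a : Matrix n n ℝ) (b : Matrix m n ℝ) (c : Matrix m m ℝ)
    (hM : (Matrix.fromBlocks a bᵀ b c).PosDef) :
    (((Matrix.fromBlocks a bᵀ b c)⁻¹).toBlocks₂₂ - c⁻¹).PosSemidef ∧
      (((Matrix.fromBlocks a bᵀ b c)⁻¹).toBlocks₂₂ = c⁻¹ ↔ b = 0) := by
  have hc : c.PosDef := hM.submatrix (e := Sum.inr) Sum.inr_injective
  have hP : ((Matrix.fromBlocks a bᵀ b c)⁻¹).toBlocks₁₁.PosDef :=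
    hM.inv.submatrix (e := Sum.inl) Sum.inl_injective
  have key := inv_toBlocks₂₂_sub_inv_eq a b c hM hc
  refine ⟨?_, ?_⟩
  · rw [key, ← conjTranspose_eq_transpose_of_trivial]
    exact hP.posSemidef.mul_mul_conjTranspose_same _
  · rw [← sub_eq_zero, key]
    constructor
    · intro h
      have hX := eq_zero_of_posDef_congr_eq_zero hP h
      rw [← mul_nonsing_inv_cancel_left c b ((isUnit_iff_isUnit_det c).mp hc.isUnit), hX,
        Matrix.mul_zero]
    · rintro rfl
      rw [Matrix.mul_zero, Matrix.zero_mul, Matrix.zero_mul]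
end

section
/- Let ι be a finite type, A a real symmetric positive definite ι×ι matrix, p : ι → κ a map assigning each index to a block, and let D be the block-diagonal part of A, i.e., D i j = A i j if p i = p j and D i j = 0 otherwise. Let w : ι → ℝ with w i ≥ 0 for all i. Then D is positive definite, and ∑ i, w i * (A⁻¹) i i ≥ ∑ i, w i * (D⁻¹) i i. (Any nonnegatively weighted sum of diagonal entries of the inverse is reduced, or left unchanged, by discarding the off-block-diagonal entries of A.) -/
/-!
Write `x_k` for the restriction of a vector `x` to the block `k`. The whole argument rests on the
identity `x_k ⬝ A x_k = x_k ⬝ D x` (`dotProduct_blockRestrict`). Summed over the blocks it reads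
`x ⬝ D x = ∑ k, x_k ⬝ A x_k`, so positive definiteness passes from `A` to `D`.

For the inequality it is enough to compare single diagonal entries. The variational bound
`2 z i - z ⬝ A z ≤ (A⁻¹) i i` holds for every vector `z` (`two_mul_sub_le_inv_diag`). Taking for `z`
the restriction of `y = D⁻¹ eᵢ` to the block of `i`, the identity gives
`z ⬝ A z = z ⬝ D y = z ⬝ eᵢ = y i = (D⁻¹) i i`, and the bound becomes `(D⁻¹) i i ≤ (A⁻¹) i i`.
-/

open Matrix

/-- The restriction of the vector `x` to the block `k`, extended by zero outside the block. -/
def blockRestrict {ι κ : Type*} [DecidableEq κ] (p : ι → κ) (k : κ) (x : ι → ℝ) : ι → ℝ :=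
  fun a => if p a = k then x a else 0

theorem dotProduct_blockRestrict {ι κ : Type*} [Fintype ι] [DecidableEq κ]
    {A D : Matrix ι ι ℝ} {p : ι → κ}
    (hD : ∀ i j, D i j = if p i = p j then A i j else 0) (k : κ) (x : ι → ℝ) :
    blockRestrict p k x ⬝ᵥ (A *ᵥ blockRestrict p k x) = blockRestrict p k x ⬝ᵥ (D *ᵥ x) := by
  simp only [dotProduct, mulVec, blockRestrict]
  refine Finset.sum_congr rfl fun a _ => ?_
  by_cases ha : p a = k
  · congr 1
    refine Finset.sum_congr rfl fun b _ => ?_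
    by_cases hb : p b = k
    · simp [hD, ha, hb]
    · simp [hD, ha, hb, Ne.symm hb]
  · simp [ha]

theorem sum_blockRestrict {ι κ : Type*} [Fintype ι] [DecidableEq κ] (p : ι → κ) (x : ι → ℝ) :
    ∑ k ∈ Finset.univ.image p, blockRestrict p k x = x := by
  ext a
  simp [Finset.sum_apply, blockRestrict]

theorem posDef_blockDiag {ι κ : Type*} [Fintype ι] [DecidableEq κ]
    {A D : Matrix ι ι ℝ} (hA : A.PosDef) {p : ι → κ}
    (hD : ∀ i j, D i j = if p i = p j then A i j else 0) : D.PosDef := by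
  refine PosDef.of_dotProduct_mulVec_pos ?_ fun x hx => ?_
  · ext i j
    have h := hA.isHermitian.apply i j
    simp only [star_trivial] at h
    simp [hD, h, eq_comm]
  · have key : x ⬝ᵥ (D *ᵥ x) = ∑ k ∈ Finset.univ.image p,
        blockRestrict p k x ⬝ᵥ (A *ᵥ blockRestrict p k x) := by
      simp_rw [dotProduct_blockRestrict hD]
      rw [← sum_dotProduct, sum_blockRestrict]
    rw [star_trivial, key]
    obtain ⟨j, hj⟩ := Function.ne_iff.mp hx
    refine Finset.sum_pos' (fun k _ => ?_) ⟨p j, by simp, ?_⟩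
    · simpa using hA.posSemidef.dotProduct_mulVec_nonneg (blockRestrict p k x)
    · have hne : blockRestrict p (p j) x ≠ 0 :=
        Function.ne_iff.mpr ⟨j, by simpa [blockRestrict] using hj⟩
      simpa using hA.dotProduct_mulVec_pos hne

/-- The right-hand side is the maximum over `z` of the left-hand side, attained at `z = A⁻¹ eᵢ`: the
difference of the two sides is the value of the quadratic form of `A` at `A⁻¹ eᵢ - z`. -/
theorem two_mul_sub_le_inv_diag {ι : Type*} [Fintype ι] [DecidableEq ι]
    {A : Matrix ι ι ℝ} (hA : A.PosDef) (i : ι) (z : ι → ℝ) :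
    2 * z i - z ⬝ᵥ (A *ᵥ z) ≤ (A⁻¹) i i := by
  set u := A⁻¹ *ᵥ Pi.single i (1 : ℝ) with hu
  have hdet : IsUnit A.det := (isUnit_iff_isUnit_det A).mp hA.isUnit
  have hAu : A *ᵥ u = Pi.single i 1 := by
    rw [hu, mulVec_mulVec, mul_nonsing_inv _ hdet, one_mulVec]
  have hui : u i = (A⁻¹) i i := by simp [hu]
  have hT : Aᵀ = A := by simpa using hA.isHermitian.eq
  have hcross : u ⬝ᵥ (A *ᵥ z) = z i := by
    rw [dotProduct_mulVec, ← mulVec_transpose, hT, hAu, single_one_dotProduct]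
  have h := hA.posSemidef.dotProduct_mulVec_nonneg (u - z)
  rw [star_trivial, mulVec_sub, sub_dotProduct, dotProduct_sub, dotProduct_sub, hcross, hAu,
    dotProduct_single_one, dotProduct_single_one, hui] at h
  linarith

theorem inv_blockDiag_diag_le {ι κ : Type*} [Fintype ι] [DecidableEq ι] [DecidableEq κ]
    {A D : Matrix ι ι ℝ} (hA : A.PosDef) {p : ι → κ}
    (hD : ∀ i j, D i j = if p i = p j then A i j else 0) (i : ι) :
    (D⁻¹) i i ≤ (A⁻¹) i i := by
  have hdet : IsUnit D.det := (isUnit_iff_isUnit_det D).mp (posDef_blockDiag hA hD).isUnit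
  set y := D⁻¹ *ᵥ Pi.single i (1 : ℝ) with hy
  have hDy : D *ᵥ y = Pi.single i 1 := by
    rw [hy, mulVec_mulVec, mul_nonsing_inv _ hdet, one_mulVec]
  have hzi : blockRestrict p (p i) y i = (D⁻¹) i i := by simp [blockRestrict, hy]
  have h := two_mul_sub_le_inv_diag hA i (blockRestrict p (p i) y)
  rw [dotProduct_blockRestrict hD, hDy, dotProduct_single_one, hzi] at h
  linarith


/-- Discarding the off-block-diagonal entries of a symmetric positive definite
matrix `A` (with blocks given by the fibres of `p : ι → κ`) yields a positive
definite matrix `D`, and every nonnegatively weighted sum of diagonal entries of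
the inverse matrix can only decrease, i.e.
`∑ i, w i * (A⁻¹) i i ≥ ∑ i, w i * (D⁻¹) i i`. -/
theorem weighted_diag_inv_ge_blockDiag
    {ι κ : Type*} [Fintype ι] [DecidableEq ι] [DecidableEq κ]
    (A : Matrix ι ι ℝ) (hA : A.PosDef) (p : ι → κ)
    (D : Matrix ι ι ℝ) (hD : ∀ i j, D i j = if p i = p j then A i j else 0)
    (w : ι → ℝ) (hw : ∀ i, 0 ≤ w i) :
    D.PosDef ∧ ∑ i, w i * (A⁻¹) i i ≥ ∑ i, w i * (D⁻¹) i i := by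
  exact ⟨posDef_blockDiag hA hD, Finset.sum_le_sum fun i _ =>
    mul_le_mul_of_nonneg_left (inv_blockDiag_diag_le hA hD i) (hw i)⟩
end

section
/- Let A be a real symmetric positive definite ι×ι matrix (ι finite) and fix i ∈ ι. Then (A⁻¹) i i ≥ (A i i)⁻¹, with equality if and only if A i j = 0 for all j ≠ i. -/
/-!
Write `a = A i i` and let `x = A eᵢ - a eᵢ` be the off-diagonal part of the `i`-th column of `A`.
Then `xᵀ A⁻¹ x = a (a A⁻¹ᵢᵢ - 1)`. Since `A⁻¹` is positive definite, the left side is nonnegative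
and vanishes only for `x = 0`, which by symmetry says that the `i`-th row of `A` is zero off the
diagonal.
-/

open Matrix

/-- The quadratic form of `A⁻¹` at the off-diagonal part `A eᵢ - Aᵢᵢ eᵢ` of the `i`-th column. -/
lemma quadForm_inv_offDiag {ι : Type*} [Fintype ι] [DecidableEq ι]
    (A : Matrix ι ι ℝ) (hA : A.PosDef) (i : ι) :
    (A *ᵥ Pi.single i 1 - A i i • Pi.single i 1) ⬝ᵥ
      (A⁻¹ *ᵥ (A *ᵥ Pi.single i 1 - A i i • Pi.single i 1)) = A i i * (A i i * A⁻¹ i i - 1) := by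
  have hdet : IsUnit A.det := (Matrix.isUnit_iff_isUnit_det A).1 hA.isUnit
  have hT : Aᵀ = A := by
    have h := hA.isHermitian.eq
    rwa [Matrix.conjTranspose_eq_transpose_of_trivial] at h
  have h1 : A⁻¹ *ᵥ (A *ᵥ Pi.single i 1 - A i i • Pi.single i 1)
      = Pi.single i 1 - A i i • (A⁻¹ *ᵥ Pi.single i 1) := by
    rw [Matrix.mulVec_sub, Matrix.mulVec_mulVec, Matrix.nonsing_inv_mul A hdet, Matrix.one_mulVec,
      Matrix.mulVec_smul]
  have h2 : (A *ᵥ Pi.single i 1) ⬝ᵥ (A⁻¹ *ᵥ Pi.single i 1) = 1 := by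
    rw [Matrix.dotProduct_mulVec, ← Matrix.mulVec_transpose, Matrix.transpose_nonsing_inv, hT,
      Matrix.mulVec_mulVec, Matrix.nonsing_inv_mul A hdet]
    simp
  rw [h1, sub_dotProduct, dotProduct_sub, dotProduct_smul, h2]
  simp
  ring

/-- For a real symmetric positive definite matrix `A` and an index `i`, the `i`-th
diagonal entry of `A⁻¹` is at least the reciprocal of the `i`-th diagonal entry of
`A`, with equality if and only if the off-diagonal entries of the `i`-th row of `A`
all vanish. -/
theorem inv_diag_ge_diag_inv
    {ι : Type*} [Fintype ι] [DecidableEq ι]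
    (A : Matrix ι ι ℝ) (hA : A.PosDef) (i : ι) :
    (A i i)⁻¹ ≤ (A⁻¹) i i ∧ ((A⁻¹) i i = (A i i)⁻¹ ↔ ∀ j ≠ i, A i j = 0) := by
  have ha : 0 < A i i := hA.diag_pos
  have hsymm : ∀ j, A j i = A i j := fun j => by simpa using hA.isHermitian.apply i j
  have hq := quadForm_inv_offDiag A hA i
  set x : ι → ℝ := A *ᵥ Pi.single i 1 - A i i • Pi.single i 1 with hx
  have hx0 : x = 0 ↔ ∀ j ≠ i, A i j = 0 := by
    constructor
    · intro h j hj
      have := congrFun h j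
      simpa [hx, hj, hsymm] using this
    · intro h
      funext j
      by_cases hj : j = i
      · subst hj
        simp [hx]
      · simp [hx, hj, hsymm, h j hj]
  have hnonneg : 0 ≤ x ⬝ᵥ (A⁻¹ *ᵥ x) := by
    simpa using hA.inv.posSemidef.dotProduct_mulVec_nonneg x
  have hzero : x ⬝ᵥ (A⁻¹ *ᵥ x) = 0 ↔ x = 0 := by
    constructor
    · intro h
      by_contra hne
      have hpos := hA.inv.dotProduct_mulVec_pos hne
      rw [star_trivial, h] at hpos
      exact lt_irrefl _ hpos
    · rintro h
      simp [h]
  rw [hq] at hnonneg hzero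
  constructor
  · rw [inv_le_iff_one_le_mul₀' ha]
    linarith [nonneg_of_mul_nonneg_right hnonneg ha]
  · rw [← hx0, ← hzero, mul_eq_zero, or_iff_right ha.ne', sub_eq_zero, mul_comm]
    exact (mul_eq_one_iff_eq_inv₀ ha.ne').symm
end

section
/- Let ι be a finite type and let v, w : ι → ℝ with v k ≥ 0 and w k > 0 for all k. Then (∑ k, (v k)^(2/3))^3 ≤ (∑ k, (v k)^2 / (w k)^2) * (∑ k, w k)^2. (Equivalently: minimizing ∑ₖ vₖ²/wₖ² over positive weights w with ∑ₖ wₖ = N gives the lower bound ‖v‖_{2/3}²/N², which is the optimal variance bound attainable by sensor-separable states distributing N particles among the sensors.) -/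
/-!
With `xₖ = vₖ^(2/3)`, so that `xₖ³ = vₖ²`, the claim is the weighted power mean inequality
`(∑ wₖ zₖ)³ ≤ (∑ wₖ)² * ∑ wₖ zₖ³` for `zₖ = xₖ / wₖ`: indeed `wₖ zₖ = xₖ` and
`wₖ zₖ³ = vₖ² / wₖ²`. This is Jensen's inequality for `t ↦ t³` with the normalized weights
`wₖ / ∑ wⱼ`.
-/

/-- Hölder-type bound: for entrywise nonnegative `v` and entrywise positive
weights `w`, `‖v‖_{2/3}² ≤ (∑ k, vₖ²/wₖ²) * (∑ k, wₖ)²`. -/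
theorem norm_two_thirds_sq_le_weighted
    {ι : Type*} [Fintype ι] (v w : ι → ℝ)
    (hv : ∀ k, 0 ≤ v k) (hw : ∀ k, 0 < w k) :
    (∑ k, (v k) ^ ((2 : ℝ) / 3)) ^ 3 ≤
      (∑ k, (v k) ^ 2 / (w k) ^ 2) * (∑ k, w k) ^ 2 := by
  rcases isEmpty_or_nonempty ι with hι | hι
  · simp
  have hW : 0 < ∑ k, w k := Finset.sum_pos (fun k _ => hw k) Finset.univ_nonempty
  set W := ∑ k, w k with hWdef
  have hcube : ∀ k, ((v k) ^ ((2 : ℝ) / 3)) ^ 3 = v k ^ 2 := by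
    intro k
    rw [← Real.rpow_natCast, ← Real.rpow_mul (hv k), ← Real.rpow_natCast]
    norm_num
  have hJ := Real.pow_arith_mean_le_arith_mean_pow Finset.univ (fun k => w k / W)
    (fun k => (v k) ^ ((2 : ℝ) / 3) / w k)
    (fun k _ => (div_pos (hw k) hW).le)
    (by rw [← Finset.sum_div, ← hWdef, div_self hW.ne'])
    (fun k _ => div_nonneg (Real.rpow_nonneg (hv k) _) (hw k).le) 3
  have hL : ∑ k, w k / W * ((v k) ^ ((2 : ℝ) / 3) / w k)
      = (∑ k, (v k) ^ ((2 : ℝ) / 3)) / W := by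
    rw [Finset.sum_div]
    refine Finset.sum_congr rfl fun k _ => ?_
    have := (hw k).ne'
    field_simp
  have hR : ∑ k, w k / W * ((v k) ^ ((2 : ℝ) / 3) / w k) ^ 3
      = (∑ k, (v k) ^ 2 / (w k) ^ 2) / W := by
    rw [Finset.sum_div]
    refine Finset.sum_congr rfl fun k _ => ?_
    have := (hw k).ne'
    rw [div_pow, hcube]
    field_simp
  rw [hL, hR, div_pow, div_le_iff₀ (pow_pos hW 3)] at hJ
  refine hJ.trans_eq ?_
  field_simp
end

section
/- Let ι be a finite type and v : ι → ℝ with v k ≥ 0 for all k. Then (∑ k, v k)^2 ≤ (∑ k, (v k)^(2/3))^3, and if there exist two distinct indices i ≠ j with v i > 0 and v j > 0 then the inequality is strict: (∑ k, v k)^2 < (∑ k, (v k)^(2/3))^3. (In p-norm notation: ‖v‖₁² ≤ ‖v‖_{2/3}², with strict inequality for every non-trivial v; hence the GHZ-state variance bound ‖v‖₁²/(μκ²N²) is strictly below the separable-state bound ‖v‖_{2/3}²/(μκ²N²) whenever v has at least two nonzero entries.) -/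
/-! Put `w k = (v k)^(1/3)` and `S = ∑ k, (w k)²`, so that `v k = (w k)³`. Each `w k` is at most
`√S`, hence `v k ≤ (w k)² √S`; summing gives `∑ k, v k ≤ S √S`, and squaring gives the bound.
If `v i` and `v j` are both positive with `i ≠ j`, then `w i < √S`, because the `j`-th term of `S`
is positive, so the `i`-th summand is already strictly smaller. -/

/-- For any entrywise nonnegative `v`, `‖v‖₁² ≤ ‖v‖_{2/3}²`, i.e.
`(∑ k, v k)² ≤ (∑ k, (v k)^(2/3))³`, and the inequality is strict whenever `v`
has at least two strictly positive entries. -/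
theorem norm_one_sq_le_norm_two_thirds_sq
    {ι : Type*} [Fintype ι] (v : ι → ℝ) (hv : ∀ k, 0 ≤ v k) :
    (∑ k, v k) ^ 2 ≤ (∑ k, (v k) ^ ((2 : ℝ) / 3)) ^ 3 ∧
      (∀ i j : ι, i ≠ j → 0 < v i → 0 < v j →
        (∑ k, v k) ^ 2 < (∑ k, (v k) ^ ((2 : ℝ) / 3)) ^ 3) := by
  classical
  obtain ⟨w, hw0, hw3, hw2⟩ : ∃ w : ι → ℝ, (∀ k, 0 ≤ w k) ∧ (∀ k, v k = w k ^ 3) ∧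
      ∀ k, v k ^ ((2 : ℝ) / 3) = w k ^ 2 := by
    refine ⟨fun k => v k ^ ((1 : ℝ) / 3), fun k => Real.rpow_nonneg (hv k) _, fun k => ?_,
      fun k => ?_⟩
    · rw [← Real.rpow_natCast, ← Real.rpow_mul (hv k)]
      norm_num
    · rw [← Real.rpow_natCast, ← Real.rpow_mul (hv k)]
      norm_num
  simp only [hw2]
  set S := ∑ k, w k ^ 2 with hS
  have hS0 : 0 ≤ S := Finset.sum_nonneg fun k _ => sq_nonneg _
  have hle : ∀ k, w k ≤ √S := fun k =>
    Real.le_sqrt_of_sq_le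
      (Finset.single_le_sum (f := fun k => w k ^ 2) (fun k _ => sq_nonneg _) (Finset.mem_univ k))
  have hterm : ∀ k, v k ≤ w k ^ 2 * √S := fun k => by
    rw [hw3 k, pow_succ]
    exact mul_le_mul_of_nonneg_left (hle k) (sq_nonneg _)
  have hsum : ∑ k, w k ^ 2 * √S = S * √S := by rw [hS, Finset.sum_mul]
  have hsq : (S * √S) ^ 2 = S ^ 3 := by rw [mul_pow, Real.sq_sqrt hS0]; ring
  have hv0 : 0 ≤ ∑ k, v k := Finset.sum_nonneg fun k _ => hv k
  rw [← hsq, ← hsum]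
  refine ⟨pow_le_pow_left₀ hv0 (Finset.sum_le_sum fun k _ => hterm k) 2, fun i j hij hi hj => ?_⟩
  have hpos : ∀ k, 0 < v k → 0 < w k := fun k hk =>
    (hw0 k).lt_of_ne' fun h => by simp [hw3 k, h] at hk
  have hlt : w i < √S := by
    refine Real.lt_sqrt_of_sq_lt ?_
    exact Finset.single_lt_sum (f := fun k => w k ^ 2) hij.symm (Finset.mem_univ i)
      (Finset.mem_univ j) (pow_pos (hpos j hj) 2) fun k _ _ => sq_nonneg _
  refine pow_lt_pow_left₀ (Finset.sum_lt_sum (fun k _ => hterm k) ⟨i, Finset.mem_univ i, ?_⟩)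
    hv0 two_ne_zero
  rw [hw3 i, pow_succ]
  exact mul_lt_mul_of_pos_left hlt (pow_pos (hpos i hi) 2)
end
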